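/- arXiv:2402.08331 — 2 statements merged into one kernel-verified Lean document; each statement's English description precedes it below -/
import Mathlib

section
/- Let k ≥ 1 and let α_1, …, α_k, β_1, …, β_k be real numbers with 0 < α_i < 1 and 0 < β_i < 1 for each i. For each i define the Sturmian word s_i : ℕ → ℤ by s_i(n) = ⌊(n+1)α_i + β_i⌋ − ⌊n α_i + β_i⌋, and define the word s : ℕ → ℤ^k by s(n) = (s_1(n), …, s_k(n)). If the k+1 real numbers 1, α_1, …, α_k are linearly independent over ℚ, then for every n ≥ 0 the number of distinct length-n factors of s, i.e., the cardinality of the set { (s(q), s(q+1), …, s(q+n−1)) : q ≥ 0 }, equals (n+1)^k. -/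
open MeasureTheory Filter Topology UnitAddTorus

theorem ps_mF_ne_one {k : ℕ} (α : Fin k → ℝ)
    (hindep : LinearIndependent ℚ (Fin.cons 1 α : Fin (k + 1) → ℝ)) (m : Fin k → ℤ) (hm : m ≠ 0) :
    mFourier m (fun i => (α i : UnitAddCircle)) ≠ 1 := by
  intro h
  have h1 : mFourier m (fun i => (α i : UnitAddCircle))
      = Complex.exp (2 * Real.pi * Complex.I * ((∑ i, m i * α i : ℝ) : ℂ)) := by
    simp only [mFourier, ContinuousMap.coe_mk, fourier_coe_apply]
    rw [← Complex.exp_sum]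
    congr 1
    push_cast
    rw [Finset.mul_sum]
    refine Finset.sum_congr rfl fun i _ => ?_
    simp
    ring
  rw [h1, Complex.exp_eq_one_iff] at h
  obtain ⟨p, hp⟩ := h
  have hpi : (2 * Real.pi * Complex.I : ℂ) ≠ 0 := Complex.two_pi_I_ne_zero
  have h2 : ((∑ i, m i * α i : ℝ) : ℂ) = ((p : ℝ) : ℂ) := by
    apply mul_left_cancel₀ hpi
    rw [hp]; push_cast; ring
  have h3 : (∑ i, m i * α i : ℝ) = p := by exact_mod_cast h2
  have h4 := Fintype.linearIndependent_iff.1 hindep (Fin.cons (-p : ℚ) (fun i => (m i : ℚ))) (by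
    rw [Fin.sum_univ_succ]
    simp only [Fin.cons_zero, Fin.cons_succ, Rat.smul_def]
    push_cast
    rw [h3]; ring)
  apply hm
  funext i
  have := h4 i.succ
  simpa using this

theorem ps_vol (k : ℕ) : (volume : Measure (UnitAddTorus (Fin k))).real Set.univ = 1 := by
  rw [Measure.real, volume_pi, Measure.pi_univ]
  simp [AddCircle.measure_univ]

theorem ps_kron_avg {k : ℕ} (a : UnitAddTorus (Fin k))
    (ha : ∀ m : Fin k → ℤ, m ≠ 0 → mFourier m a ≠ 1)
    (g : C(UnitAddTorus (Fin k), ℂ)) (hg : g ∈ Submodule.span ℂ (Set.range (mFourier (d := Fin k)))) :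
    Tendsto (fun N : ℕ => (N : ℂ)⁻¹ * ∑ q ∈ Finset.range N, g (q • a)) atTop (𝓝 (∫ x, g x)) := by
  induction hg using Submodule.span_induction with
  | mem x hx =>
    obtain ⟨m, rfl⟩ := hx
    have hpow : ∀ q : ℕ, mFourier m (q • a) = (mFourier m a) ^ q := by
      have hadd : ∀ x y, mFourier m (x + y) = mFourier m x * mFourier m y := by
        intro x y
        simp only [mFourier, ContinuousMap.coe_mk, Pi.add_apply, ← Finset.prod_mul_distrib]
        refine Finset.prod_congr rfl fun i _ => ?_
        simp [fourier_apply, smul_add, AddCircle.toCircle_add]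
      intro q
      induction q with
      | zero => simp [mFourier]
      | succ q ih => rw [succ_nsmul, hadd, ih, pow_succ]
    have hadd : ∀ x y, mFourier m (x + y) = mFourier m x * mFourier m y := by
      intro x y
      simp only [mFourier, ContinuousMap.coe_mk, Pi.add_apply, ← Finset.prod_mul_distrib]
      refine Finset.prod_congr rfl fun i _ => ?_
      simp [fourier_apply, smul_add, AddCircle.toCircle_add]
    simp only [hpow]
    by_cases hm : m = 0
    · subst hm
      simp only [mFourier_zero, ContinuousMap.one_apply, one_pow]
      simp only [Finset.sum_const, Finset.card_range, nsmul_eq_mul, mul_one, integral_const,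
        ps_vol, one_smul]
      apply tendsto_const_nhds.congr'
      filter_upwards [eventually_gt_atTop 0] with N hN
      have : (N : ℂ) ≠ 0 := by exact_mod_cast hN.ne'
      field_simp
    · have hz := ha m hm
      have hI : (∫ x, mFourier m x) = 0 := by
        have h1 := integral_add_right_eq_self (μ := volume) (fun x => mFourier m x) a
        simp only [hadd] at h1
        rw [integral_mul_const] at h1
        have h2 : (∫ x, mFourier m x) * (mFourier m a - 1) = 0 := by rw [mul_sub, h1]; ring
        exact (mul_eq_zero.1 h2).resolve_right (sub_ne_zero.2 hz)
      rw [hI]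
      have hn : ‖mFourier m a‖ ≤ 1 := by
        exact ((mFourier m).norm_coe_le_norm a).trans (mFourier_norm (n := m)).le
      have hb : ∀ N : ℕ, ‖∑ q ∈ Finset.range N, (mFourier m a) ^ q‖ ≤ 2 / ‖mFourier m a - 1‖ := by
        intro N
        rw [geom_sum_eq hz, norm_div]
        gcongr
        refine (norm_sub_le _ _).trans ?_
        rw [norm_pow, norm_one]
        linarith [pow_le_one₀ (n := N) (norm_nonneg _) hn]
      apply squeeze_zero_norm (a := fun N : ℕ => (N : ℝ)⁻¹ * (2 / ‖mFourier m a - 1‖))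
      · intro N
        rw [norm_mul, norm_inv]
        simp only [Complex.norm_natCast]
        gcongr
        exact hb N
      · simpa using (tendsto_inv_atTop_nhds_zero_nat (𝕜 := ℝ)).mul_const (2 / ‖mFourier m a - 1‖)
  | zero => simp
  | add x y _ _ hx hy =>
    have hi : ∀ f : C(UnitAddTorus (Fin k), ℂ), Integrable f volume := fun f =>
      f.continuous.integrable_of_hasCompactSupport (HasCompactSupport.of_compactSpace _)
    simp only [ContinuousMap.add_apply, Finset.sum_add_distrib, mul_add]
    rw [integral_add (hi x) (hi y)]
    exact hx.add hy
  | smul c x _ hx =>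
    simp only [ContinuousMap.smul_apply, ← Finset.smul_sum, integral_smul, mul_smul_comm]
    exact hx.const_smul c

theorem ps_kron_open {k : ℕ} (a : UnitAddTorus (Fin k))
    (ha : ∀ m : Fin k → ℤ, m ≠ 0 → mFourier m a ≠ 1)
    (U : Set (UnitAddTorus (Fin k))) (hU : IsOpen U) (hne : U.Nonempty) : ∃ q : ℕ, q • a ∈ U := by
  by_contra! hcon
  obtain ⟨x0, hx0⟩ := hne
  obtain ⟨f, hf0, hf1, hf2⟩ := exists_continuous_zero_one_of_isClosed (s := Uᶜ) (t := {x0})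
    hU.isClosed_compl isClosed_singleton (by simpa using hx0)
  have hpos : 0 < ∫ x, f x := by
    apply f.continuous.integral_pos_of_hasCompactSupport_nonneg_nonzero
      (HasCompactSupport.of_compactSpace _) (fun x => (hf2 x).1) (x := x0)
    rw [hf1 rfl]; simp
  have hi : ∀ f : C(UnitAddTorus (Fin k), ℂ), Integrable f volume := fun f =>
      f.continuous.integrable_of_hasCompactSupport (HasCompactSupport.of_compactSpace _)
  set ε := (∫ x, f x) / 3 with hε
  have hεp : 0 < ε := by positivity
  let F : C(UnitAddTorus (Fin k), ℂ) := ⟨fun x => (f x : ℂ), by fun_prop⟩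
  have hF : F ∈ (Submodule.span ℂ (Set.range (mFourier (d := Fin k)))).topologicalClosure := by
    rw [span_mFourier_closure_eq_top]; trivial
  obtain ⟨g, hg, hgd⟩ := Metric.mem_closure_iff.1 hF ε hεp
  rw [dist_eq_norm] at hgd
  have hpt : ∀ x, ‖F x - g x‖ ≤ ε := fun x => ((F - g).norm_coe_le_norm x).trans hgd.le
  have hlim := (ps_kron_avg a ha g hg).norm
  have h1 : ‖∫ x, g x‖ ≤ ε := by
    refine le_of_tendsto hlim (Eventually.of_forall fun N => ?_)
    have hq : ∀ q ∈ Finset.range N, ‖g (q • a)‖ ≤ ε := by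
      intro q _
      have := hpt (q • a)
      have h0 : F (q • a) = 0 := by
        change ((f (q • a) : ℝ) : ℂ) = 0
        rw [hf0 (hcon q)]; simp
      rwa [h0, zero_sub, norm_neg] at this
    rw [norm_mul, norm_inv, Complex.norm_natCast]
    have h2 := norm_sum_le_of_le _ hq
    simp only [Finset.sum_const, Finset.card_range, nsmul_eq_mul] at h2
    rcases Nat.eq_zero_or_pos N with rfl | hN
    · simpa using hεp.le
    · have : (0 : ℝ) < N := by exact_mod_cast hN
      rw [inv_mul_le_iff₀ this]; exact h2
  have h2 : ‖(∫ x, F x) - ∫ x, g x‖ ≤ ε := by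
    rw [← integral_sub (hi F) (hi g)]
    simpa [ps_vol] using norm_integral_le_of_norm_le_const (μ := volume) (Eventually.of_forall hpt)
  have h3 : ‖∫ x, F x‖ = ∫ x, f x := by
    have : (∫ x, F x) = ((∫ x, f x : ℝ) : ℂ) := integral_ofReal
    rw [this, Complex.norm_real, Real.norm_of_nonneg hpos.le]
  have h4 := norm_sub_norm_le (∫ x, F x) (∫ x, g x)
  rw [h3] at h4
  linarith

theorem ps_kron {k : ℕ} (α : Fin k → ℝ)
    (hindep : LinearIndependent ℚ (Fin.cons 1 α : Fin (k + 1) → ℝ))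
    (l u : Fin k → ℝ) (hlu : ∀ i, l i < u i) :
    ∃ q : ℕ, ∀ i, ∃ p : ℤ, l i < q * α i - p ∧ q * α i - p < u i := by
  obtain ⟨q, hq⟩ := ps_kron_open (fun i => (α i : UnitAddCircle)) (ps_mF_ne_one α hindep)
    (Set.pi Set.univ fun i => (fun x : ℝ => (x : UnitAddCircle)) '' Set.Ioo (l i) (u i))
    (isOpen_set_pi Set.finite_univ fun i _ =>
      QuotientAddGroup.isOpenMap_coe _ isOpen_Ioo)
    (Set.univ_pi_nonempty_iff.2 fun i => (Set.nonempty_Ioo.2 (hlu i)).image _)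
  refine ⟨q, fun i => ?_⟩
  obtain ⟨r, hr, hrq⟩ := hq i trivial
  have h : ((r : ℝ) : UnitAddCircle) = ((q * α i : ℝ) : UnitAddCircle) := by
    rw [← nsmul_eq_mul]; exact hrq
  rw [eq_comm, ← sub_eq_zero, ← AddCircle.coe_sub, AddCircle.coe_eq_zero_iff] at h
  obtain ⟨p, hp⟩ := h
  refine ⟨p, ?_⟩
  have : q * α i - p = r := by
    simp at hp; linarith
  rw [this]; exact hr

theorem ps_step (T : Finset ℝ) (hT : ∀ t ∈ T, 0 < t ∧ t < 1) (m : ℕ) (hm : m ≤ T.card) :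
    ∃ a : ℝ, 0 ≤ a ∧ a < 1 ∧ (T.filter (· ≤ a)).card = m := by
  induction m with
  | zero =>
    refine ⟨0, le_rfl, one_pos, ?_⟩
    rw [Finset.card_eq_zero, Finset.filter_eq_empty_iff]
    intro t ht; exact not_le.2 (hT t ht).1
  | succ m ih =>
    obtain ⟨a, h0, h1, hc⟩ := ih (by omega)
    have hne : (T.filter (a < ·)).Nonempty := by
      by_contra hh
      rw [Finset.not_nonempty_iff_eq_empty, Finset.filter_eq_empty_iff] at hh
      rw [Finset.filter_true_of_mem fun t ht => not_lt.1 (hh ht)] at hc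
      omega
    obtain ⟨t0, ht0, hmin⟩ := Finset.exists_min_image _ id hne
    rw [Finset.mem_filter] at ht0
    refine ⟨t0, (hT _ ht0.1).1.le, (hT _ ht0.1).2, ?_⟩
    have : T.filter (· ≤ t0) = insert t0 (T.filter (· ≤ a)) := by
      ext t
      simp only [Finset.mem_filter, Finset.mem_insert]
      constructor
      · rintro ⟨ht, hle⟩
        by_cases hta : t ≤ a
        · exact Or.inr ⟨ht, hta⟩
        · left
          exact le_antisymm hle (hmin t (Finset.mem_filter.2 ⟨ht, not_le.1 hta⟩))
      · rintro (rfl | ⟨ht, hle⟩)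
        · exact ⟨ht0.1, le_rfl⟩
        · exact ⟨ht, hle.trans ht0.2.le⟩
    rw [this, Finset.card_insert_of_notMem, hc]
    simp [ht0.2]

theorem ps_interval (T : Finset ℝ) (hT : ∀ t ∈ T, 0 < t ∧ t < 1) (m : ℕ) (hm : m ≤ T.card) :
    ∃ a b : ℝ, 0 ≤ a ∧ a < b ∧ b ≤ 1 ∧ ∀ x, a < x → x < b → (T.filter (· ≤ x)).card = m := by
  obtain ⟨a, h0, h1, hc⟩ := ps_step T hT m hm
  obtain ⟨b, hb, hmin⟩ := Finset.exists_min_image (insert 1 (T.filter (a < ·))) id (by simp)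
  refine ⟨a, b, h0, ?_, hmin 1 (by simp), fun x hax hxb => ?_⟩
  · simp only [Finset.mem_insert, Finset.mem_filter] at hb
    rcases hb with rfl | hb
    · exact h1
    · exact hb.2
  · rw [← hc]
    congr 1
    refine Finset.filter_congr fun t ht => ⟨fun h => ?_, fun h => h.trans hax.le⟩
    by_contra hta
    have := hmin t (by simp [ht, not_le.1 hta])
    simp at this
    linarith

theorem ps_irr {k : ℕ} (α : Fin k → ℝ)
    (hindep : LinearIndependent ℚ (Fin.cons 1 α : Fin (k + 1) → ℝ)) (i : Fin k)
    (j p : ℤ) (h : j * α i = p) : j = 0 := by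
  by_contra hj
  apply ps_mF_ne_one α hindep (Pi.single i j) (by simpa using hj)
  simp only [mFourier, ContinuousMap.coe_mk]
  rw [Finset.prod_eq_single i]
  · rw [Pi.single_eq_same, fourier_coe_apply, Complex.exp_eq_one_iff]
    refine ⟨p, ?_⟩
    have : (j : ℂ) * (α i : ℂ) = p := by exact_mod_cast h
    rw [← this]; simp; ring
  · intro b _ hb
    simp [Pi.single_eq_of_ne hb]
  · simp

/-- break points -/
noncomputable def psT (a : ℝ) (n : ℕ) : Finset ℝ :=
  (Finset.range n).image fun j : ℕ => 1 - Int.fract (((j : ℝ) + 1) * a)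

theorem psT_card (a : ℝ) (ha : ∀ j p : ℤ, j * a = p → j = 0) (n : ℕ) : (psT a n).card = n := by
  rw [psT, Finset.card_image_of_injective, Finset.card_range]
  intro x y hxy
  simp only [sub_right_inj] at hxy
  obtain ⟨z, hz⟩ := Int.fract_eq_fract.1 hxy
  have := ha (x - y) z (by push_cast; linarith)
  omega

theorem psT_mem (a : ℝ) (ha : ∀ j p : ℤ, j * a = p → j = 0) (n : ℕ) :
    ∀ t ∈ psT a n, 0 < t ∧ t < 1 := by
  intro t ht
  simp only [psT, Finset.mem_image] at ht
  obtain ⟨j, -, rfl⟩ := ht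
  refine ⟨by linarith [Int.fract_lt_one (((j : ℝ) + 1) * a)], ?_⟩
  have : 0 < Int.fract (((j : ℝ) + 1) * a) := by
    refine lt_of_le_of_ne (Int.fract_nonneg _) fun h => ?_
    have h2 := Int.floor_add_fract (((j : ℝ) + 1) * a)
    rw [← h, add_zero] at h2
    have := ha (j + 1) ⌊((j : ℝ) + 1) * a⌋ (by push_cast; exact h2.symm)
    omega
  linarith

theorem ps_floor (x y : ℝ) (h0 : 0 ≤ x) (h1 : x < 1) :
    ⌊x + y⌋ = ⌊y⌋ + if 1 - Int.fract y ≤ x then 1 else 0 := by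
  have h2 := Int.floor_add_fract y
  have h3 := Int.fract_nonneg y
  have h4 := Int.fract_lt_one y
  rw [Int.floor_eq_iff]
  split_ifs <;> push_cast <;> constructor <;> linarith

theorem ps_words (a : ℝ) (n : ℕ) (x y : ℝ) (hx : 0 ≤ x ∧ x < 1)
    (hy : 0 ≤ y ∧ y < 1) :
    (∀ j < n, ⌊x + ((j : ℝ) + 1) * a⌋ - ⌊x + (j : ℝ) * a⌋
      = ⌊y + ((j : ℝ) + 1) * a⌋ - ⌊y + (j : ℝ) * a⌋) ↔
    ((psT a n).filter (· ≤ x)).card = ((psT a n).filter (· ≤ y)).card := by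
  have key : (∀ j < n, ⌊x + ((j : ℝ) + 1) * a⌋ - ⌊x + (j : ℝ) * a⌋
      = ⌊y + ((j : ℝ) + 1) * a⌋ - ⌊y + (j : ℝ) * a⌋) ↔
      ∀ t ∈ psT a n, (t ≤ x ↔ t ≤ y) := by
    have e1 : (∀ t ∈ psT a n, (t ≤ x ↔ t ≤ y)) ↔
        ∀ j < n, ⌊x + ((j : ℝ) + 1) * a⌋ = ⌊y + ((j : ℝ) + 1) * a⌋ := by
      simp only [psT, Finset.forall_mem_image, Finset.mem_range]
      refine forall₂_congr fun j _ => ?_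
      rw [ps_floor x _ hx.1 hx.2, ps_floor y _ hy.1 hy.2]
      split_ifs with h1 h2 h2 <;> simp [h1, h2]
    rw [e1]
    have hz : ⌊x⌋ = ⌊y⌋ := by
      rw [Int.floor_eq_zero_iff.2 hx, Int.floor_eq_zero_iff.2 hy]
    constructor
    · intro h j
      induction j with
      | zero => intro hj; have := h 0 hj; simp [hz] at this; simpa using this
      | succ j ih =>
        intro hj
        have h1 := ih (by omega)
        have h2 := h (j + 1) hj
        push_cast at h2 ⊢
        linarith
    · intro h j hj
      rw [h j hj]
      rcases j with _ | j
      · simp [hz]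
      · have := h j (by omega)
        push_cast
        rw [this]
  rw [key]
  constructor
  · intro h
    rw [Finset.filter_congr h]
  · intro h
    have aux : ∀ x y : ℝ, x ≤ y →
        ((psT a n).filter (· ≤ x)).card = ((psT a n).filter (· ≤ y)).card →
        ∀ t ∈ psT a n, (t ≤ x ↔ t ≤ y) := by
      intro x y hxy hc
      have hsub : (psT a n).filter (· ≤ x) ⊆ (psT a n).filter (· ≤ y) :=
        Finset.monotone_filter_right _ fun t _ ht => le_trans ht hxy
      exact Finset.filter_inj'.1 (Finset.eq_of_subset_of_card_le hsub hc.ge)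
    rcases le_total x y with hxy | hxy
    · exact aux x y hxy h
    · exact fun t ht => (aux y x hxy h.symm t ht).symm

theorem ps_count {A B : Type*} (f : ℕ → A) (g : ℕ → B) (h : ∀ p q, f p = f q ↔ g p = g q)
    (hg : Function.Surjective g) : (Set.range f).ncard = Nat.card B := by
  rw [← Set.ncard_univ, eq_comm, ← Set.ncard_image_of_injective _
    (f := f ∘ Function.surjInv hg)]
  · congr 1
    ext w
    simp only [Set.image_univ, Set.mem_range, Function.comp]
    constructor
    · rintro ⟨y, rfl⟩; exact ⟨_, rfl⟩
    · rintro ⟨q, rfl⟩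
      exact ⟨g q, (h _ _).2 (Function.surjInv_eq hg _)⟩
  · intro x y hxy
    have := (h _ _).1 hxy
    rwa [Function.surjInv_eq hg, Function.surjInv_eq hg] at this

/-- If `1, α₁, …, α_k` are linearly independent over `ℚ`, then the product of the
`k` Sturmian words with slopes `αᵢ` and intercepts `βᵢ` has subword complexity
`(n+1)^k`. -/
theorem product_sturmian_complexity
    (k : ℕ) (hk : 1 ≤ k)
    (α β : Fin k → ℝ)
    (hα : ∀ i, 0 < α i ∧ α i < 1) (hβ : ∀ i, 0 < β i ∧ β i < 1)
    (hindep : LinearIndependent ℚ (Fin.cons 1 α : Fin (k + 1) → ℝ))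
    (s : ℕ → Fin k → ℤ)
    (hs : ∀ n i, s n i = ⌊((n : ℝ) + 1) * α i + β i⌋ - ⌊(n : ℝ) * α i + β i⌋) :
    ∀ n : ℕ,
      Set.ncard {w : Fin n → Fin k → ℤ | ∃ q : ℕ, ∀ j : Fin n, w j = s (q + j)}
        = (n + 1) ^ k := by
  intro n
  have hirr := fun i => ps_irr α hindep i
  let x : ℕ → Fin k → ℝ := fun q i => Int.fract (q * α i + β i)
  have hx : ∀ q i, 0 ≤ x q i ∧ x q i < 1 := fun q i => ⟨Int.fract_nonneg _, Int.fract_lt_one _⟩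
  have hsx : ∀ q j i, s (q + j) i
      = ⌊x q i + ((j : ℝ) + 1) * α i⌋ - ⌊x q i + (j : ℝ) * α i⌋ := by
    intro q j i
    rw [hs]
    have e : ∀ r : ℝ, ⌊x q i + r⌋ = ⌊q * α i + β i + r⌋ - ⌊q * α i + β i⌋ := by
      intro r
      rw [← Int.floor_sub_intCast]
      congr 1
      simp only [x, Int.fract]
      ring
    rw [e, e]
    push_cast
    have e1 : ((q : ℝ) + j + 1) * α i + β i = q * α i + β i + (j + 1) * α i := by ring
    have e2 : ((q : ℝ) + j) * α i + β i = q * α i + β i + j * α i := by ring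
    rw [e1, e2]; ring
  have hset : {w : Fin n → Fin k → ℤ | ∃ q : ℕ, ∀ j : Fin n, w j = s (q + j)}
      = Set.range (fun (q : ℕ) (j : Fin n) => s (q + j)) := by
    ext w
    simp only [Set.mem_ofPred_eq, Set.mem_range, funext_iff (g := w)]
    exact exists_congr fun q => forall_congr' fun j => eq_comm
  let g : ℕ → Fin k → Fin (n + 1) := fun q i =>
    ⟨((psT (α i) n).filter (· ≤ x q i)).card, by
      have := Finset.card_filter_le (psT (α i) n) (· ≤ x q i)
      rw [psT_card _ (hirr i)] at this
      omega⟩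
  rw [hset, ps_count _ g]
  · simp
  · intro p q
    simp only [funext_iff, g, Fin.mk.injEq]
    rw [forall_comm]
    refine forall_congr' fun i => ?_
    rw [← ps_words _ _ _ _ (hx p i) (hx q i)]
    simp only [hsx]
    exact ⟨fun h j hj => h ⟨j, hj⟩, fun h j => h j j.2⟩
  · intro c
    choose a b ha hab hb hc using fun i => ps_interval (psT (α i) n) (psT_mem _ (hirr i) n) (c i)
      (by rw [psT_card _ (hirr i)]; exact Nat.lt_succ_iff.1 (c i).2)
    obtain ⟨q, hq⟩ := ps_kron α hindep (fun i => a i - β i) (fun i => b i - β i)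
      (fun i => by linarith [hab i])
    refine ⟨q, ?_⟩
    funext i
    obtain ⟨p, hp1, hp2⟩ := hq i
    have hxe : x q i = q * α i + β i - p := by
      simp only [x]
      rw [Int.fract_eq_iff]
      exact ⟨by linarith [ha i], by linarith [hb i], p, by ring⟩
    apply Fin.ext
    exact hc i (x q i) (by rw [hxe]; linarith) (by rw [hxe]; linarith)
end

section
/- For every integer n ≥ 1, the number of natural numbers m with ⌊m(√2 − 1)⌋ = n equals ⌊(n+1)(√2 + 1)⌋ − ⌊n(√2 + 1)⌋. (Equivalently, OEIS A097509(n) = A276862(n) for all n ≥ 1, a conjecture of Dekking.) -/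
/-- Dekking's conjecture: for `n ≥ 1`, the number of `m` with `⌊m(√2−1)⌋ = n`
equals `⌊(n+1)(√2+1)⌋ − ⌊n(√2+1)⌋` (i.e., A097509(n) = A276862(n)). -/
theorem A097509_eq_A276862 :
    ∀ n : ℕ, 1 ≤ n →
      (({m : ℕ | ⌊(m : ℝ) * (Real.sqrt 2 - 1)⌋ = (n : ℤ)}.ncard : ℤ))
        = ⌊((n : ℝ) + 1) * (Real.sqrt 2 + 1)⌋ - ⌊(n : ℝ) * (Real.sqrt 2 + 1)⌋ := by
  intro n hn
  have hs : Real.sqrt 2 * Real.sqrt 2 = 2 := Real.mul_self_sqrt (by norm_num)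
  have h1 : 1 < Real.sqrt 2 := by
    rw [Real.lt_sqrt] <;> norm_num
  have irr : ∀ k m : ℕ, 1 ≤ k → (k : ℝ) * (Real.sqrt 2 + 1) ≠ m := by
    intro k m hk h
    have h3 : Irrational ((k : ℝ) * (Real.sqrt 2 + 1)) := by
      have h4 : Irrational (Real.sqrt 2 + (1 : ℕ)) := irrational_sqrt_two.add_natCast 1
      have h5 := h4.natCast_mul (m := k) (by omega)
      simpa using h5
    exact h3.ne_nat m h
  have i1 := irr n
  have i2 := fun m => irr (n + 1) m (by omega)
  push_cast at i2
  have p1 : 0 ≤ (n : ℝ) * (Real.sqrt 2 + 1) := by positivity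
  have p2 : 0 ≤ ((n : ℝ) + 1) * (Real.sqrt 2 + 1) := by positivity
  obtain ⟨A, hA⟩ := Int.eq_ofNat_of_zero_le (Int.floor_nonneg.2 p1)
  obtain ⟨B, hB⟩ := Int.eq_ofNat_of_zero_le (Int.floor_nonneg.2 p2)
  have hAB : A ≤ B := by
    have : (A : ℤ) ≤ B := by
      rw [← hA, ← hB]
      apply Int.floor_le_floor
      nlinarith
    exact_mod_cast this
  have hset : {m : ℕ | ⌊(m : ℝ) * (Real.sqrt 2 - 1)⌋ = (n : ℤ)} = ↑(Finset.Ioc A B) := by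
    ext m
    have a1 : A < m ↔ (n : ℝ) * (Real.sqrt 2 + 1) < m := by
      have : ⌊(n : ℝ) * (Real.sqrt 2 + 1)⌋ < (m : ℤ) ↔ _ := Int.floor_lt
      rw [hA] at this
      exact_mod_cast this
    have b1 : m ≤ B ↔ (m : ℝ) ≤ ((n : ℝ) + 1) * (Real.sqrt 2 + 1) := by
      have : (m : ℤ) ≤ ⌊((n : ℝ) + 1) * (Real.sqrt 2 + 1)⌋ ↔ _ := Int.le_floor
      rw [hB] at this
      exact_mod_cast this
    simp only [Set.mem_ofPred_eq, Finset.coe_Ioc, Set.mem_Ioc, Int.floor_eq_iff, a1, b1,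
      Int.cast_natCast]
    constructor
    · rintro ⟨h, h'⟩
      refine ⟨lt_of_le_of_ne ?_ (i1 m hn), ?_⟩ <;> nlinarith
    · rintro ⟨h, h'⟩
      have h'' := lt_of_le_of_ne h' (i2 m).symm
      constructor <;> nlinarith
  rw [hset, Set.ncard_coe_finset, hA, hB, Nat.card_Ioc]
  push_cast [hAB]
  rfl
end
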